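/- Let G be a directed graph and x an edge of G. The following are equivalent: (1) there is no directed cycle in G containing x; (2) there is an integer n ≥ 1 such that x^n ∈ I(G); (3) the Krull dimension of ℤ[x]/(I(G) ∩ ℤ[x]) equals 1; (4) the Krull dimension of ℚ[x]/(I_ℚ(G) ∩ ℚ[x]) equals 0. Moreover, there is a directed cycle in G containing x if and only if the Krull dimension of ℚ[x]/(I_ℚ(G) ∩ ℚ[x]) equals 1. -/

import Mathlib

open MvPolynomial

/-- The `l`-th elementary symmetric polynomial in the finite set `s` of variables
(`1` for `l = 0`, `0` for `l > |s|`). -/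
noncomputable def esymmOf (R : Type) [CommRing R] {E : Type} (s : Finset E) (l : ℕ) :
    MvPolynomial E R :=
  ∑ t ∈ s.powersetCard l, ∏ x ∈ t, X x

/-- The incidence ideal of the directed graph with edge-endpoint maps `src`, `tgt`:
the ideal generated by the incidence relations
`δ_{v,l} = e_l(edges out of v) - e_l(edges into v)` for all vertices `v` and all `l ≥ 1`
(for `l > k_v` the relation `δ_{v,l}` is the zero polynomial, so this ideal is generated by
the `δ_{v,l}` with `1 ≤ l ≤ k_v`). -/
noncomputable def incidenceIdeal (R : Type) [CommRing R] {V E : Type}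
    [Fintype E] [DecidableEq V] (src tgt : E → V) : Ideal (MvPolynomial E R) :=
  Ideal.span {f | ∃ (v : V) (l : ℕ), 1 ≤ l ∧
    f = esymmOf R (Finset.univ.filter fun x => src x = v) l
      - esymmOf R (Finset.univ.filter fun x => tgt x = v) l}

/-- A directed cycle in the directed graph with edge-endpoint maps `src`, `tgt`:
pairwise distinct vertices `v_0, …, v_n` and edges `x_0, …, x_n` with `x_i` going
from `v_i` to `v_{i+1}` (indices mod `n+1`). -/
structure DirCycle {V E : Type} (src tgt : E → V) where
  n : ℕ
  vtx : ZMod (n + 1) → V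
  edge : ZMod (n + 1) → E
  vtx_inj : Function.Injective vtx
  edge_src : ∀ i, src (edge i) = vtx i
  edge_tgt : ∀ i, tgt (edge i) = vtx (i + 1)

/-- `C` is the set of edges of a directed cycle.  (A directed cycle, considered up to
cyclic permutation, is uniquely determined by its set of edges.) -/
def IsCycle {V E : Type} (src tgt : E → V) (C : Set E) : Prop :=
  ∃ c : DirCycle src tgt, C = Set.range c.edge

/-! ### Graph part -/

lemma exists_cycle_of_walk {V E : Type} (src tgt : E → V) (x : E)
    (h : Relation.ReflTransGen (fun u v => ∃ e, src e = u ∧ tgt e = v) (tgt x) (src x)) :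
    ∃ C : Set E, IsCycle src tgt C ∧ x ∈ C := by
  classical
  have hw : ∃ n : ℕ, ∃ p : ℕ → V, p 0 = tgt x ∧ p n = src x ∧
      ∀ i < n, ∃ e, src e = p i ∧ tgt e = p (i + 1) := by
    generalize src x = w at h
    induction h with
    | refl => exact ⟨0, fun _ => tgt x, rfl, rfl, by simp⟩
    | @tail b c _ hbc ih =>
      obtain ⟨n, p, h0, hn, hp⟩ := ih
      refine ⟨n + 1, fun k => if k ≤ n then p k else c, by simp [h0], by simp, ?_⟩
      intro i hi
      rcases Nat.lt_or_ge i n with h | h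
      · simpa [show i ≤ n by omega, show i + 1 ≤ n by omega] using hp i h
      · obtain rfl : i = n := by omega
        simpa [hn] using hbc
  obtain ⟨p, h0, hn, hp⟩ := Nat.find_spec hw
  set n := Nat.find hw with hndef
  have hinj : ∀ i j, i < j → j ≤ n → p i ≠ p j := by
    intro i j hij hj heq
    refine Nat.find_min hw (m := n - (j - i)) (by omega) ?_
    refine ⟨fun k => if k ≤ i then p k else p (k + (j - i)), by simp [h0], ?_, ?_⟩
    · by_cases hc : n - (j - i) ≤ i
      · have : j = n := by omega
        have h2 : n - (j - i) = i := by omega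
        simp only [h2, le_refl, if_true]
        rw [heq, this, hn]
      · simp only [hc, if_false]
        rw [show n - (j - i) + (j - i) = n by omega, hn]
    · intro k hk
      rcases lt_trichotomy k i with h | h | h
      · simpa [show k ≤ i by omega, show k + 1 ≤ i by omega] using hp k (by omega)
      · subst h
        have := hp j (by omega)
        rw [← heq] at this
        simpa [show k + 1 + (j - k) = j + 1 by omega] using this
      · have := hp (k + (j - i)) (by omega)
        simpa [show ¬ k ≤ i by omega, show ¬ k + 1 ≤ i by omega,
          show k + 1 + (j - i) = k + (j - i) + 1 by omega] using this
  have : Nonempty E := ⟨x⟩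
  choose! ed hs ht using hp
  let vt : Fin (n + 1) → V := fun i => p i.val
  let eg : Fin (n + 1) → E := fun i => if i.val < n then ed i.val else x
  have c1 : Function.Injective vt := by
    intro i j hij
    apply Fin.ext
    rcases lt_trichotomy i.val j.val with h | h | h
    · exact absurd hij (hinj _ _ h (by omega))
    · exact h
    · exact absurd hij.symm (hinj _ _ h (by omega))
  have c2 : ∀ i, src (eg i) = vt i := by
    intro i
    have hi := i.is_lt
    simp only [eg, vt]
    split_ifs with h
    · exact hs _ h
    · rw [← hn]; congr 1; omega
  have c3 : ∀ i, tgt (eg i) = vt (i + 1) := by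
    intro i
    have hi := i.is_lt
    simp only [eg, vt]
    rw [Fin.val_add_one]
    split_ifs with h h' h'
    · rw [h'] at h; exact absurd h (by simp)
    · exact ht _ h
    · exact h0.symm
    · exact absurd (Fin.ext (by simp only [Fin.val_last]; omega)) h'
  exact ⟨_, ⟨⟨n, vt, eg, c1, c2, c3⟩, rfl⟩, Fin.last n, by simp [eg]⟩

lemma exists_cycle_of_balanced {V E : Type} [Fintype V] [DecidableEq V]
    (src tgt : E → V) (S : Finset E)
    (hS : ∀ v, (S.filter fun e => src e = v).card = (S.filter fun e => tgt e = v).card)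
    (x : E) (hx : x ∈ S) :
    ∃ C : Set E, IsCycle src tgt C ∧ x ∈ C := by
  classical
  apply exists_cycle_of_walk
  set r : V → V → Prop := fun u v => ∃ e, src e = u ∧ tgt e = v with hr
  set A : Finset V := Finset.univ.filter fun v => Relation.ReflTransGen r (tgt x) v with hA
  have key : ∀ f : E → V, (S.filter fun e => f e ∈ A).card
      = ∑ v ∈ A, (S.filter fun e => f e = v).card := by
    intro f
    rw [Finset.card_eq_sum_card_fiberwise (f := f) (t := A)]
    · refine Finset.sum_congr rfl fun v hv => ?_
      congr 1
      ext e
      simp only [Finset.mem_filter]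
      constructor
      · rintro ⟨⟨h1, -⟩, h2⟩; exact ⟨h1, h2⟩
      · rintro ⟨h1, h2⟩; exact ⟨⟨h1, h2 ▸ hv⟩, h2⟩
    · intro e he
      simp only [Finset.coe_filter, Set.mem_ofPred_eq] at he
      exact he.2
  have hsub : (S.filter fun e => src e ∈ A) ⊆ (S.filter fun e => tgt e ∈ A) := by
    intro e he
    simp only [hA, Finset.mem_filter, Finset.mem_univ, true_and] at he ⊢
    exact ⟨he.1, he.2.tail ⟨e, rfl, rfl⟩⟩
  have heq := Finset.eq_of_subset_of_card_le hsub (by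
    rw [key, key]
    exact (Finset.sum_congr rfl fun v _ => hS v).ge)
  have hxm : x ∈ S.filter fun e => tgt e ∈ A := by
    simp only [hA, Finset.mem_filter, Finset.mem_univ, true_and]
    exact ⟨hx, Relation.ReflTransGen.refl⟩
  rw [← heq] at hxm
  simp only [hA, Finset.mem_filter, Finset.mem_univ, true_and] at hxm
  exact hxm.2

/-! ### Equal elementary symmetric functions in a domain -/

lemma padded_prod {K E : Type} [CommRing K] (f : E → K) (s : Finset E) (m : ℕ) :
    (∏ i ∈ s, (Polynomial.X + Polynomial.C (f i))) * Polynomial.X ^ m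
      = ∑ l ∈ Finset.range (s.card + m + 1),
        Polynomial.C (∑ u ∈ s.powersetCard l, ∏ i ∈ u, f i) *
          Polynomial.X ^ (s.card + m - l) := by
  have h := Multiset.prod_X_add_C_eq_sum_esymm (s.val.map f)
  rw [Multiset.map_map] at h
  have h' : (∏ i ∈ s, (Polynomial.X + Polynomial.C (f i))) =
      ∑ l ∈ Finset.range (s.card + 1),
        Polynomial.C (∑ u ∈ s.powersetCard l, ∏ i ∈ u, f i) *
          Polynomial.X ^ (s.card - l) := by
    simp only [Finset.esymm_map_val, Multiset.card_map, Finset.card_val] at h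
    exact h
  rw [h', Finset.sum_mul]
  have hsub : Finset.range (s.card + 1) ⊆ Finset.range (s.card + m + 1) := by
    intro a; simp only [Finset.mem_range]; omega
  rw [← Finset.sum_subset hsub]
  · refine Finset.sum_congr rfl fun l hl => ?_
    rw [Finset.mem_range] at hl
    rw [mul_assoc, ← pow_add]
    congr 2
    omega
  · intro l _ hl
    rw [Finset.mem_range] at hl
    rw [Finset.powersetCard_eq_empty.mpr (by omega)]
    simp

lemma card_eq_of_esymm {K E : Type} [CommRing K] [IsDomain K] [DecidableEq K] (f : E → K)
    (s t : Finset E)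
    (h : ∀ l, 1 ≤ l → ∑ u ∈ s.powersetCard l, ∏ i ∈ u, f i
      = ∑ u ∈ t.powersetCard l, ∏ i ∈ u, f i) (a : K) (ha : a ≠ 0) :
    (s.filter fun e => f e = a).card = (t.filter fun e => f e = a).card := by
  have h1 : (∏ i ∈ s, (Polynomial.X + Polynomial.C (f i))) * Polynomial.X ^ t.card
      = (∏ i ∈ t, (Polynomial.X + Polynomial.C (f i))) * Polynomial.X ^ s.card := by
    rw [padded_prod, padded_prod, add_comm t.card s.card]
    refine Finset.sum_congr rfl fun l _ => ?_
    rcases Nat.eq_zero_or_pos l with rfl | hl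
    · simp
    · rw [h l hl]
  have key : ∀ (s : Finset E) (m : ℕ),
      ((∏ i ∈ s, (Polynomial.X + Polynomial.C (f i))) * Polynomial.X ^ m).roots.count (-a)
        = (s.filter fun e => f e = a).card := by
    intro s m
    have : (∏ i ∈ s, (Polynomial.X + Polynomial.C (f i))) * Polynomial.X ^ m
        = ((s.val.map (fun i => - f i) + Multiset.replicate m 0).map
            fun r => Polynomial.X - Polynomial.C r).prod := by
      rw [Multiset.map_add, Multiset.prod_add, Multiset.map_map]
      simp
    rw [this, Polynomial.roots_multiset_prod_X_sub_C, Multiset.count_add, Multiset.count_map,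
      Multiset.count_replicate, if_neg (by simpa [eq_comm] using ha), add_zero]
    rw [← Finset.card_val, Finset.filter_val]
    congr 1
    refine Multiset.filter_congr fun e _ => ?_
    rw [neg_inj, eq_comm]
  rw [← key s t.card, ← key t s.card, h1]

lemma aeval_esymmOf {R A E : Type} [CommRing R] [CommRing A] [Algebra R A] (g : E → A)
    (s : Finset E) (l : ℕ) :
    aeval (R := R) g (esymmOf R s l) = ∑ u ∈ s.powersetCard l, ∏ i ∈ u, g i := by
  simp [esymmOf, map_sum, map_prod]

lemma pow_mem_of_no_cycle (R : Type) [CommRing R] {V E : Type} [Fintype V] [Fintype E]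
    [DecidableEq V] (src tgt : E → V) (x : E)
    (hx : ¬ ∃ C : Set E, IsCycle src tgt C ∧ x ∈ C) :
    ∃ n : ℕ, 1 ≤ n ∧ (X x : MvPolynomial E R) ^ n ∈ incidenceIdeal R src tgt := by
  classical
  have hrad : (X x : MvPolynomial E R) ∈ (incidenceIdeal R src tgt).radical := by
    rw [Ideal.radical_eq_sInf, Submodule.mem_sInf]
    rintro P ⟨hIP, hP⟩
    by_contra hxP
    apply hx
    let f : E → MvPolynomial E R ⧸ P := fun e => Ideal.Quotient.mk P (X e)
    have hf : ∀ (s : Finset E) l, Ideal.Quotient.mk P (esymmOf R s l)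
        = ∑ u ∈ s.powersetCard l, ∏ i ∈ u, f i := by
      intro s l
      simp [esymmOf, map_sum, map_prod, f]
    have hne : f x ≠ 0 := by
      simpa [f, Ideal.Quotient.eq_zero_iff_mem] using hxP
    apply exists_cycle_of_balanced src tgt (Finset.univ.filter fun e => f e = f x) _ x (by simp)
    intro v
    rw [Finset.filter_comm, Finset.filter_comm (p := fun e => f e = f x)]
    apply card_eq_of_esymm f _ _ _ _ hne
    intro l hl
    rw [← hf, ← hf, ← sub_eq_zero, ← map_sub, Ideal.Quotient.eq_zero_iff_mem]
    exact hIP (Ideal.subset_span ⟨v, l, hl, rfl⟩)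
  obtain ⟨n, hn⟩ := hrad
  exact ⟨n + 1, by omega, by rw [pow_succ]; exact Ideal.mul_mem_right _ _ hn⟩

/-! ### A cycle gives no relations -/

lemma sum_powersetCard_ite {A E : Type} [CommRing A] [DecidableEq E] (C : Finset E)
    (a : A) (s : Finset E) (l : ℕ) :
    ∑ u ∈ s.powersetCard l, ∏ i ∈ u, (if i ∈ C then a else 0)
      = ((s.filter (· ∈ C)).card.choose l : A) * a ^ l := by
  have hsub : (s.filter (· ∈ C)).powersetCard l ⊆ s.powersetCard l :=
    Finset.powersetCard_mono (Finset.filter_subset _ _)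
  rw [← Finset.sum_subset hsub]
  · rw [Finset.sum_congr rfl (g := fun _ => a ^ l)]
    · simp [Finset.card_powersetCard]
    · intro u hu
      rw [Finset.mem_powersetCard] at hu
      rw [← hu.2, ← Finset.prod_const]
      refine Finset.prod_congr rfl fun i hi => ?_
      rw [if_pos (Finset.mem_filter.mp (hu.1 hi)).2]
  · intro u hu hu'
    rw [Finset.mem_powersetCard] at hu hu'
    have : ∃ i ∈ u, i ∉ C := by
      by_contra! hc
      exact hu' ⟨fun i hi => Finset.mem_filter.mpr ⟨hu.1 hi, hc i hi⟩, hu.2⟩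
    obtain ⟨i, hi, hiC⟩ := this
    exact Finset.prod_eq_zero hi (if_neg hiC)

lemma comap_eq_bot_of_cycle (R : Type) [CommRing R] {V E : Type} [Fintype E]
    [DecidableEq V] (src tgt : E → V) (x : E)
    (hx : ∃ C : Set E, IsCycle src tgt C ∧ x ∈ C) :
    Ideal.comap (Polynomial.aeval (R := R) (X x : MvPolynomial E R)).toRingHom
      (incidenceIdeal R src tgt) = ⊥ := by
  classical
  obtain ⟨_, ⟨c, rfl⟩, hxc⟩ := hx
  let C : Finset E := Finset.univ.image c.edge
  have hxC : x ∈ C := by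
    obtain ⟨i, hi⟩ := hxc
    exact Finset.mem_image.mpr ⟨i, Finset.mem_univ _, hi⟩
  have hinj : Function.Injective c.edge := by
    intro i j hij
    apply c.vtx_inj
    rw [← c.edge_src, ← c.edge_src, hij]
  have hcard : ∀ v, ((Finset.univ.filter fun e => src e = v).filter (· ∈ C)).card
      = ((Finset.univ.filter fun e => tgt e = v).filter (· ∈ C)).card := by
    intro v
    have h1 : (Finset.univ.filter fun e => src e = v).filter (· ∈ C)
        = (Finset.univ.filter fun i => c.vtx i = v).image c.edge := by
      ext e
      simp only [Finset.mem_filter, Finset.mem_univ, true_and, Finset.mem_image, C]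
      constructor
      · rintro ⟨h, i, rfl⟩
        exact ⟨i, by rw [← c.edge_src]; exact h, rfl⟩
      · rintro ⟨i, h, rfl⟩
        exact ⟨by rw [c.edge_src]; exact h, i, rfl⟩
    have h2 : (Finset.univ.filter fun e => tgt e = v).filter (· ∈ C)
        = (Finset.univ.filter fun i => c.vtx (i + 1) = v).image c.edge := by
      ext e
      simp only [Finset.mem_filter, Finset.mem_univ, true_and, Finset.mem_image, C]
      constructor
      · rintro ⟨h, i, rfl⟩
        exact ⟨i, by rw [← c.edge_tgt]; exact h, rfl⟩
      · rintro ⟨i, h, rfl⟩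
        exact ⟨by rw [c.edge_tgt]; exact h, i, rfl⟩
    rw [h1, h2, Finset.card_image_of_injective _ hinj, Finset.card_image_of_injective _ hinj]
    refine Finset.card_nbij' (fun i => i - 1) (fun i => i + 1) ?_ ?_ ?_ ?_
    · intro i; simp
    · intro i; simp
    · intro i; simp
    · intro i; simp
  let φ : MvPolynomial E R →ₐ[R] Polynomial R :=
    aeval fun e => if e ∈ C then Polynomial.X else 0
  have hφ : incidenceIdeal R src tgt ≤ RingHom.ker φ := by
    rw [incidenceIdeal, Ideal.span_le]
    rintro _ ⟨v, l, -, rfl⟩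
    rw [SetLike.mem_coe, RingHom.mem_ker, map_sub, aeval_esymmOf, aeval_esymmOf,
      sum_powersetCard_ite, sum_powersetCard_ite, hcard, sub_self]
  rw [eq_bot_iff]
  intro p hp
  have h : φ (Polynomial.aeval (X x : MvPolynomial E R) p) = 0 := hφ hp
  rw [← Polynomial.aeval_algHom_apply] at h
  have hφx : φ (X x) = Polynomial.X := by simp [φ, hxC]
  rw [hφx, Polynomial.aeval_X_left_apply] at h
  exact h

/-! ### Krull dimensions -/

lemma ringKrullDim_of_pow_mem (R : Type) [CommRing R] [IsDomain R] {V E : Type} [Fintype E]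
    [DecidableEq V] (src tgt : E → V) (x : E)
    (h : ∃ n : ℕ, 1 ≤ n ∧ (X x : MvPolynomial E R) ^ n ∈ incidenceIdeal R src tgt) :
    ringKrullDim (Polynomial R ⧸
      Ideal.comap (Polynomial.aeval (R := R) (X x : MvPolynomial E R)).toRingHom
        (incidenceIdeal R src tgt)) = ringKrullDim R := by
  set J := Ideal.comap (Polynomial.aeval (R := R) (X x : MvPolynomial E R)).toRingHom
        (incidenceIdeal R src tgt) with hJ
  obtain ⟨n, hn, hmem⟩ := h
  let P : Ideal (Polynomial R) := Ideal.span {Polynomial.X - Polynomial.C (0 : R)}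
  have hP : ∀ p : Polynomial R, p ∈ P ↔ p.eval 0 = 0 := by
    intro p
    rw [Ideal.mem_span_singleton, Polynomial.dvd_iff_isRoot, Polynomial.IsRoot]
  have hJP : J ≤ P := by
    intro p hp
    rw [hP]
    let φ : MvPolynomial E R →ₐ[R] R := aeval fun _ => 0
    have hφ : incidenceIdeal R src tgt ≤ RingHom.ker φ := by
      rw [incidenceIdeal, Ideal.span_le]
      rintro _ ⟨v, l, hl, rfl⟩
      have h0 : ∀ s : Finset E, ∑ u ∈ s.powersetCard l, ∏ i ∈ u, (0 : R) = 0 := by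
        intro s
        refine Finset.sum_eq_zero fun u hu => ?_
        rw [Finset.mem_powersetCard] at hu
        rw [Finset.prod_const, hu.2, zero_pow (by omega)]
      rw [SetLike.mem_coe, RingHom.mem_ker, map_sub, aeval_esymmOf, aeval_esymmOf, h0, h0,
        sub_self]
    have h : φ (Polynomial.aeval (X x : MvPolynomial E R) p) = 0 := hφ hp
    rw [← Polynomial.aeval_algHom_apply] at h
    have hφx : φ (X x) = 0 := by simp [φ]
    rw [hφx] at h
    simpa using h
  have hXJ : (Polynomial.X : Polynomial R) ^ n ∈ J := by
    rw [hJ, Ideal.mem_comap]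
    simpa using hmem
  have hz : PrimeSpectrum.zeroLocus (J : Set (Polynomial R)) = PrimeSpectrum.zeroLocus P := by
    apply subset_antisymm
    · intro q hq
      have hq' : J ≤ q.asIdeal := hq
      have hX : Polynomial.X ∈ q.asIdeal := q.isPrime.mem_of_pow_mem n (hq' hXJ)
      change P ≤ q.asIdeal
      rw [Ideal.span_le, Set.singleton_subset_iff]
      simpa using hX
    · exact PrimeSpectrum.zeroLocus_anti_mono hJP
  rw [ringKrullDim_quotient, hz, ← ringKrullDim_quotient]
  exact ringKrullDim_eq_of_ringEquiv (Polynomial.quotientSpanXSubCAlgEquiv (0 : R)).toRingEquiv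

lemma ringKrullDim_of_cycle (R : Type) [CommRing R] [IsNoetherianRing R] {V E : Type} [Fintype E]
    [DecidableEq V] (src tgt : E → V) (x : E)
    (h : ∃ C : Set E, IsCycle src tgt C ∧ x ∈ C) :
    ringKrullDim (Polynomial R ⧸
      Ideal.comap (Polynomial.aeval (R := R) (X x : MvPolynomial E R)).toRingHom
        (incidenceIdeal R src tgt)) = ringKrullDim R + 1 := by
  rw [comap_eq_bot_of_cycle R src tgt x h,
    ringKrullDim_eq_of_ringEquiv (RingEquiv.quotientBot (Polynomial R)),
    Polynomial.ringKrullDim_of_isNoetherianRing]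

theorem stmt12 {V E : Type} [Fintype V] [Fintype E] [DecidableEq V] [DecidableEq E]
    (src tgt : E → V) (x : E) :
    List.TFAE
      [¬ ∃ C : Set E, IsCycle src tgt C ∧ x ∈ C,
       ∃ n : ℕ, 1 ≤ n ∧ (X x : MvPolynomial E ℤ) ^ n ∈ incidenceIdeal ℤ src tgt,
       ringKrullDim
         (Polynomial ℤ ⧸
           Ideal.comap (Polynomial.aeval (R := ℤ) (X x : MvPolynomial E ℤ)).toRingHom
             (incidenceIdeal ℤ src tgt)) = 1,
       ringKrullDim
         (Polynomial ℚ ⧸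
           Ideal.comap (Polynomial.aeval (R := ℚ) (X x : MvPolynomial E ℚ)).toRingHom
             (incidenceIdeal ℚ src tgt)) = 0] ∧
    ((∃ C : Set E, IsCycle src tgt C ∧ x ∈ C) ↔
      ringKrullDim
        (Polynomial ℚ ⧸
          Ideal.comap (Polynomial.aeval (R := ℚ) (X x : MvPolynomial E ℚ)).toRingHom
            (incidenceIdeal ℚ src tgt)) = 1) := by
  have hZ : ringKrullDim ℤ = 1 := IsPrincipalIdealRing.ringKrullDim_eq_one ℤ Int.not_isField
  have hQ : ringKrullDim ℚ = 0 := ringKrullDim_eq_zero_of_field ℚ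
  have hQc := ringKrullDim_of_cycle ℚ src tgt x
  have hZc := ringKrullDim_of_cycle ℤ src tgt x
  have hQn := fun h => ringKrullDim_of_pow_mem ℚ src tgt x (pow_mem_of_no_cycle ℚ src tgt x h)
  have hZn := ringKrullDim_of_pow_mem ℤ src tgt x
  rw [hQ] at hQc hQn
  rw [hZ] at hZc hZn
  constructor
  · tfae_have 1 → 2 := pow_mem_of_no_cycle ℤ src tgt x
    tfae_have 2 → 3 := hZn
    tfae_have 3 → 1 := by
      intro h3 hc
      rw [hZc hc] at h3
      exact absurd h3 (by decide)
    tfae_have 1 → 4 := hQn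
    tfae_have 4 → 1 := by
      intro h4 hc
      rw [hQc hc] at h4
      exact absurd h4 (by simp)
    tfae_finish
  · constructor
    · intro hc
      rw [hQc hc, zero_add]
    · intro h1
      by_contra hc
      rw [hQn hc] at h1
      exact absurd h1 (by simp)
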